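/- Let p ≥ 5 be a prime, q = 2(p−1), and let m, n be integers with n ≥ m+2 > 5. Then the admissible monomials of total filtration p+1 and total degree q(p^n + p^m + p² − 1) + p − 3 are exactly the following seven multisets: (1) a_n with multiplicity p−3 together with h_{3,0}, h_{1,m}, h_{n−2,2}, h_{n,0}; (2) a_n with multiplicity p−3 together with h_{1,2}, h_{m+1,0}, h_{n−m,m}, h_{n,0}; (3) a_{m+1} once and a_n with multiplicity p−4 together with h_{3,0}, h_{n−m,m}, h_{n−2,2}, h_{n,0}; (4) a_n with multiplicity p−3 together with h_{3,0}, h_{m−1,2}, h_{n−m,m}, h_{n,0}; (5) a_n with multiplicity p−3 together with h_{3,0}, h_{m+1,0}, h_{n−m,m}, h_{n−2,2}; (6) a₃ once and a_n with multiplicity p−4 together with h_{m+1,0}, h_{n−m,m}, h_{n−2,2}, h_{n,0}; (7) a_m with multiplicity p−3 together with h_{3,0}, h_{m,0}, h_{m−2,2}, h_{1,n}. (This is the combinatorial content of Lemma 3.1 in the case r = 1, s = p−1: the May E₁-term E₁^{p+1, t(p−1)+p−3, *} has Z_p-basis g₁, …, g₇.) -/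

import Mathlib

/-- A formal May spectral sequence generator: `a k`, `h i j`, or `b i j`. -/
inductive MayGen : Type
  | a (k : ℕ)
  | h (i j : ℕ)
  | b (i j : ℕ)
  deriving DecidableEq

namespace MayGen

/-- Validity: the generators `h i j` and `b i j` require `i ≥ 1`. -/
def IsValid : MayGen → Prop
  | a _ => True
  | h i _ => 1 ≤ i
  | b i _ => 1 ≤ i

/-- May filtration of a generator. -/
def filt : MayGen → ℕ
  | a _ => 1
  | h _ _ => 1
  | b _ _ => 2

/-- Internal degree of a generator (at the prime `p`). -/
def deg (p : ℕ) : MayGen → ℕ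
  | a k => 2 * p ^ k - 1
  | h i j => 2 * (p ^ i - 1) * p ^ j
  | b i j => 2 * (p ^ i - 1) * p ^ (j + 1)

end MayGen

/-- Total filtration of a multiset of May generators. -/
def totalFilt (S : Multiset MayGen) : ℕ := (S.map MayGen.filt).sum

/-- Total internal degree of a multiset of May generators. -/
def totalDeg (p : ℕ) (S : Multiset MayGen) : ℕ := (S.map (MayGen.deg p)).sum

/-- An admissible monomial: each exterior generator `h i j` occurs at most once. -/
def Admissible (S : Multiset MayGen) : Prop := ∀ i j : ℕ, S.count (MayGen.h i j) ≤ 1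

/-- The `j`-th digit (`j ≥ -1`) of `t` in the mixed radix `(q, p, p, …)` with
`q = 2(p-1)`:  `t = c₋₁ + q·Σ_{j≥0} c_j p^j` with `0 ≤ c₋₁ < q`, `0 ≤ c_j < p`. -/
def mayDigit (p t : ℕ) (j : ℤ) : ℕ :=
  if j = -1 then t % (2 * (p - 1))
  else if 0 ≤ j then (t / (2 * (p - 1)) / p ^ j.toNat) % p
  else 0

namespace MayAux

open MayGen

/-- Start of the interval of exponents attached to a generator. -/
def st : MayGen → ℕ
  | a _ => 0
  | h _ j => j
  | b _ j => j + 1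

/-- End (exclusive) of the interval of exponents. -/
def en : MayGen → ℕ
  | a k => k
  | h i j => i + j
  | b i j => i + (j + 1)

def isA : MayGen → Bool
  | a _ => true
  | _ => false

def isB : MayGen → Bool
  | b _ _ => true
  | _ => false

abbrev col (j : ℕ) (g : MayGen) : Prop := st g ≤ j ∧ j < en g

/-- Truncated value. -/
def V (p j : ℕ) (g : MayGen) : ℕ :=
  ∑ t ∈ Finset.range (en g - j), if st g ≤ j + t then p ^ t else 0

lemma V_rec (p j : ℕ) (g : MayGen) :
    V p j g = (if col j g then 1 else 0) + p * V p (j + 1) g := by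
  unfold V col
  rcases Nat.lt_or_ge j (en g) with hlt | hge
  · obtain ⟨k, hk⟩ : ∃ k, en g - j = k + 1 := ⟨en g - j - 1, by omega⟩
    have hk' : en g - (j + 1) = k := by omega
    rw [hk, hk', Finset.sum_range_succ', Finset.mul_sum, add_comm]
    congr 1
    · simp [hlt]
    · apply Finset.sum_congr rfl
      intro t _
      rw [show j + (t + 1) = j + 1 + t by ring]
      split_ifs <;> simp [pow_succ, mul_comm]
  · have h1 : en g - j = 0 := by omega
    have h2 : en g - (j + 1) = 0 := by omega
    have h3 : ¬ (st g ≤ j ∧ j < en g) := by omega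
    rw [h1, h2, if_neg h3]; simp

lemma V_closed (p s : ℕ) (hp : 1 ≤ p) (e : ℕ) (he : s ≤ e) :
    (p - 1) * (∑ t ∈ Finset.range e, if s ≤ t then p ^ t else 0) + p ^ s = p ^ e := by
  induction e, he using Nat.le_induction with
  | base =>
    rw [Finset.sum_eq_zero]; · simp
    intro x hx
    have := Finset.mem_range.1 hx
    rw [if_neg (by omega)]
  | succ e he ih =>
    rw [Finset.sum_range_succ, if_pos he, mul_add, pow_succ]
    obtain ⟨r, rfl⟩ : ∃ r, p = r + 1 := ⟨p - 1, by omega⟩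
    simp only [Nat.add_sub_cancel] at *
    nlinarith

lemma V_zero (p : ℕ) (hp : 1 ≤ p) (g : MayGen) :
    (p - 1) * V p 0 g + p ^ st g = p ^ en g := by
  have := V_closed p (st g) hp (en g) (by cases g <;> simp [st, en])
  simpa [V] using this

lemma deg_eq (p : ℕ) (hp : 1 ≤ p) (g : MayGen) :
    deg p g = (if isA g then 1 else 0) + 2 * (p - 1) * V p 0 g := by
  have := V_zero p hp g
  rw [mul_assoc]
  cases g with
  | a k =>
    simp only [st, en, isA, deg, pow_zero] at *
    have : 1 ≤ p ^ k := Nat.one_le_pow _ _ hp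
    simp; omega
  | h i j =>
    simp only [st, en, isA, deg] at *
    rw [mul_assoc, Nat.sub_mul, ← pow_add, ← this]; simp
  | b i j =>
    simp only [st, en, isA, deg] at *
    rw [mul_assoc, Nat.sub_mul, ← pow_add, ← this]; simp

lemma totalDeg_eq (p : ℕ) (hp : 1 ≤ p) (S : Multiset MayGen) :
    totalDeg p S = S.countP (fun g => isA g) + 2 * (p - 1) * (S.map (V p 0)).sum := by
  unfold totalDeg
  induction S using Multiset.induction with
  | empty => simp
  | cons x S ih =>
    rw [Multiset.map_cons, Multiset.sum_cons, ih, Multiset.countP_cons, Multiset.map_cons,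
      Multiset.sum_cons, deg_eq p hp, mul_add]
    ring

lemma totalFilt_eq (S : Multiset MayGen) :
    totalFilt S = S.card + S.countP (fun g => isB g) := by
  unfold totalFilt
  induction S using Multiset.induction with
  | empty => simp
  | cons x S ih =>
    rw [Multiset.map_cons, Multiset.sum_cons, ih, Multiset.countP_cons, Multiset.card_cons]
    cases x <;> simp [filt, isB] <;> ring

lemma W_rec (p j : ℕ) (S : Multiset MayGen) :
    (S.map (V p j)).sum = S.countP (col j) + p * (S.map (V p (j + 1))).sum := by
  induction S using Multiset.induction with
  | empty => simp
  | cons x S ih =>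
    rw [Multiset.map_cons, Multiset.sum_cons, ih, Multiset.countP_cons, Multiset.map_cons,
      Multiset.sum_cons, V_rec, mul_add]
    ring

lemma disj_count (S : Multiset MayGen) (P Q : MayGen → Prop) [DecidablePred P] [DecidablePred Q]
    (hd : ∀ x ∈ S, P x → ¬ Q x) : S.countP P + S.countP Q ≤ S.card := by
  induction S using Multiset.induction with
  | empty => simp
  | cons x S ih =>
    have := ih (fun y hy => hd y (Multiset.mem_cons_of_mem hy))
    have h2 := hd x (Multiset.mem_cons_self x S)
    rw [Multiset.countP_cons, Multiset.countP_cons, Multiset.card_cons]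
    by_cases hP : P x
    · simp only [hP, h2 hP, if_true, if_false]; omega
    · simp only [hP, if_false]; split_ifs <;> omega

lemma zeros_run (p : ℕ) (c W : ℕ → ℕ) (hW : ∀ j, W j = c j + p * W (j + 1)) (d : ℕ) :
    ∀ (s X : ℕ), (∀ j, s ≤ j → j < s + d → c j < p) → W s = p ^ d * X →
      (∀ j, s ≤ j → j < s + d → c j = 0) ∧ W (s + d) = X := by
  induction d with
  | zero => intro s X _ h; exact ⟨fun j _ _ => by omega, by simpa using h⟩
  | succ d ih =>
    intro s X hc h
    have h1 := hW s
    have h0 := hc s le_rfl (by omega)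
    have hz : c s = 0 := by
      have : p ∣ c s := by
        rw [← Nat.dvd_add_left (Dvd.intro (W (s + 1)) rfl), ← h1, h]
        exact ⟨p ^ d * X, by ring⟩
      exact Nat.eq_zero_of_dvd_of_lt this h0
    have h2 : W (s + 1) = p ^ d * X := by
      apply Nat.eq_of_mul_eq_mul_left (show 0 < p by omega)
      rw [hz, h] at h1
      rw [zero_add] at h1
      rw [← h1]; ring
    obtain ⟨h3, h4⟩ := ih (s + 1) X (fun j _ _ => hc j (by omega) (by omega)) h2
    refine ⟨fun j hj hj' => ?_, by rw [← h4]; congr 1; ring⟩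
    rcases Nat.eq_or_lt_of_le hj with rfl | hlt
    · exact hz
    · exact h3 j hlt (by omega)

lemma step_m1 (p : ℕ) (hp : 5 ≤ p) (cc w X : ℕ) (hc : cc ≤ p + 1)
    (h : cc + p * w + 1 = p * X) : cc = p - 1 ∧ w + 1 = X := by
  have hd : p ∣ cc + 1 := by
    rw [← Nat.dvd_add_left (Dvd.intro w rfl)]
    exact ⟨X, by rw [← h]; ring⟩
  obtain ⟨k, hk⟩ := hd
  have hk1 : k = 1 := by
    rcases k with _ | _ | k
    · omega
    · rfl
    · exfalso; nlinarith
  subst hk1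
  refine ⟨by omega, ?_⟩
  apply Nat.eq_of_mul_eq_mul_left (show 0 < p by omega)
  rw [← h]; linarith

lemma step_0 (p : ℕ) (hp : 5 ≤ p) (cc w X : ℕ) (hc : cc ≤ p + 1)
    (h : cc + p * w = p * X) : (cc = 0 ∧ w = X) ∨ (cc = p ∧ w + 1 = X) := by
  have hd : p ∣ cc := by
    rw [← Nat.dvd_add_left (Dvd.intro w rfl)]
    exact ⟨X, by rw [← h]⟩
  obtain ⟨k, hk⟩ := hd
  rcases k with _ | _ | k
  · left
    refine ⟨by omega, ?_⟩
    apply Nat.eq_of_mul_eq_mul_left (show 0 < p by omega)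
    rw [← h]; omega
  · right
    refine ⟨by omega, ?_⟩
    apply Nat.eq_of_mul_eq_mul_left (show 0 < p by omega)
    rw [← h]; linarith
  · exfalso; nlinarith

lemma m1_run (p : ℕ) (hp : 5 ≤ p) (c W : ℕ → ℕ) (hW : ∀ j, W j = c j + p * W (j + 1))
    (hc : ∀ j, c j ≤ p + 1) (d : ℕ) :
    ∀ (s X : ℕ), W s + 1 = p ^ d * X →
      (∀ j, s ≤ j → j < s + d → c j = p - 1) ∧ W (s + d) + 1 = X := by
  induction d with
  | zero => intro s X h; exact ⟨fun j _ _ => by omega, by simpa using h⟩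
  | succ d ih =>
    intro s X h
    have h1 := hW s
    obtain ⟨hz, h2⟩ := step_m1 p hp (c s) (W (s + 1)) (p ^ d * X) (hc s)
      (by rw [← h1, h]; ring)
    obtain ⟨h3, h4⟩ := ih (s + 1) X h2
    refine ⟨fun j hj hj' => ?_, by rw [← h4]; congr 2; ring⟩
    rcases Nat.eq_or_lt_of_le hj with rfl | hlt
    · exact hz
    · exact h3 j hlt (by omega)

/-- The three possible column-count patterns (with `m = l + 4`, `n = l + k + 6`). -/
lemma digits (p : ℕ) (hp : 5 ≤ p) (c W : ℕ → ℕ) (hW : ∀ j, W j = c j + p * W (j + 1))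
    (hc : ∀ j, c j ≤ p + 1) (l k : ℕ)
    (hsmall : ∀ i, c i = 0 → ∀ j, i ≤ j → c j ≤ 4)
    (h0 : W 0 + 1 = p ^ (l + k + 6) + p ^ (l + 4) + p ^ 2) :
    c 0 = p - 1 ∧ c 1 = p - 1 ∧
    ((c 2 = 0 ∧ c (l + 4) = 1 ∧ c (l + 5) = 0 ∧ c (l + k + 6) = 1) ∨
     (c 2 = p ∧ (∀ j, 3 ≤ j → j < l + 4 → c j = p - 1) ∧
      ((c (l + 4) = 0 ∧ c (l + k + 5) = 0 ∧ c (l + k + 6) = 1 ∧ c (l + k + 7) = 0) ∨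
       (c (l + 4) = p ∧ (∀ j, l + 5 ≤ j → j < l + k + 6 → c j = p - 1) ∧ c (l + k + 6) = 0)))) := by
  obtain ⟨hA, hA2⟩ := m1_run p hp c W hW hc 2 0 (p ^ (l + k + 4) + p ^ (l + 2) + 1)
    (by rw [h0]; ring)
  refine ⟨hA 0 (by omega) (by omega), hA 1 (by omega) (by omega), ?_⟩
  simp only [zero_add] at hA2
  rcases step_0 p hp (c 2) (W 3) (p ^ (l + k + 3) + p ^ (l + 1)) (hc 2)
    (by rw [← hW 2]; rw [show p * (p ^ (l + k + 3) + p ^ (l + 1)) = p ^ (l + k + 4) + p ^ (l + 2) by ring]; omega) with ⟨c2, w3⟩ | ⟨c2, w3⟩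
  · left
    have hs := hsmall 2 c2
    obtain ⟨hB, hB2⟩ := zeros_run p c W hW (l + 1) 3 (p ^ (k + 2) + 1)
      (fun j _ _ => by have := hs j (by omega); omega) (by rw [w3]; ring)
    rw [show 3 + (l + 1) = l + 4 by ring] at hB2
    have h4 := hW (l + 4)
    have h4s := hs (l + 4) (by omega)
    have hc4 : c (l + 4) = 1 ∧ W (l + 5) = p ^ (k + 1) := by
      rw [hB2] at h4
      have e : c (l + 4) + p * W (l + 5) = p * p ^ (k + 1) + 1 := by rw [← h4]; ring
      have hmod : (c (l + 4) + p * W (l + 5)) % p = (p * p ^ (k + 1) + 1) % p := by rw [e]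
      rw [Nat.add_mul_mod_self_left, Nat.mul_add_mod, Nat.mod_eq_of_lt (by omega),
        Nat.mod_eq_of_lt (by omega)] at hmod
      refine ⟨hmod, ?_⟩
      apply Nat.eq_of_mul_eq_mul_left (show 0 < p by omega)
      omega
    obtain ⟨hD, hD2⟩ := zeros_run p c W hW (k + 1) (l + 5) 1
      (fun j _ _ => by have := hs j (by omega); omega) (by rw [hc4.2]; ring)
    rw [show l + 5 + (k + 1) = l + k + 6 by ring] at hD2
    refine ⟨c2, hc4.1, hD (l + 5) (by omega) (by omega), ?_⟩
    have h6 := hW (l + k + 6)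
    rw [hD2] at h6
    rcases Nat.eq_zero_or_pos (W (l + k + 6 + 1)) with hz | hpos
    · rw [hz] at h6; omega
    · exfalso; nlinarith
  · right
    refine ⟨c2, ?_⟩
    obtain ⟨hB, hB2⟩ := m1_run p hp c W hW hc (l + 1) 3 (p ^ (k + 2) + 1) (by rw [w3]; ring)
    rw [show 3 + (l + 1) = l + 4 by ring] at hB2 hB
    refine ⟨hB, ?_⟩
    have h4 := hW (l + 4)
    rcases step_0 p hp (c (l + 4)) (W (l + 5)) (p ^ (k + 1)) (hc _)
      (by rw [← h4, show W (l + 4) = p ^ (k + 2) by omega]; ring) with ⟨c4, w5⟩ | ⟨c4, w5⟩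
    · left
      have hs := hsmall _ c4
      obtain ⟨hD, hD2⟩ := zeros_run p c W hW (k + 1) (l + 5) 1
        (fun j _ _ => by have := hs j (by omega); omega) (by rw [w5]; ring)
      rw [show l + 5 + (k + 1) = l + k + 6 by ring] at hD2
      refine ⟨c4, hD (l + k + 5) (by omega) (by omega), ?_⟩
      have h6 := hW (l + k + 6)
      have h7 := hW (l + k + 7)
      rw [hD2] at h6
      rcases Nat.eq_zero_or_pos (W (l + k + 6 + 1)) with hz | hpos
      · rw [hz] at h6; exact ⟨by omega, by rw [hz] at h7; omega⟩
      · exfalso; nlinarith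
    · right
      refine ⟨c4, ?_⟩
      obtain ⟨hD, hD2⟩ := m1_run p hp c W hW hc (k + 1) (l + 5) 1 (by rw [w5]; ring)
      rw [show l + 5 + (k + 1) = l + k + 6 by ring] at hD2 hD
      have h6 := hW (l + k + 6)
      exact ⟨hD, by omega⟩

lemma pull (S : Multiset MayGen) (P : MayGen → Prop) [DecidablePred P]
    (hlt : S.countP P < S.card) : ∃ x T, S = x ::ₘ T ∧ ¬ P x := by
  by_contra hcon
  push Not at hcon
  have : S.countP P = S.card := by
    rw [Multiset.countP_eq_card]
    intro x hx
    obtain ⟨T, rfl⟩ := Multiset.exists_cons_of_mem hx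
    exact hcon x T rfl
  omega

lemma pull' (S : Multiset MayGen) (P : MayGen → Prop) [DecidablePred P]
    (hlt : 0 < S.countP P) : ∃ x T, S = x ::ₘ T ∧ P x := by
  obtain ⟨x, hx, hP⟩ := Multiset.countP_pos.1 hlt
  obtain ⟨T, rfl⟩ := Multiset.exists_cons_of_mem hx
  exact ⟨x, T, rfl, hP⟩

lemma shape0 (g : MayGen) (e : ℕ) (h0 : st g = 0) (h1 : en g = e) : g = a e ∨ g = h e 0 := by
  cases g <;> simp_all [st, en]

lemma shapePos (g : MayGen) (hb : ¬ isB g) (s d : ℕ) (hs : 0 < s) (h0 : st g = s)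
    (h1 : en g = d + s) : g = h d s := by
  cases g <;> simp_all [st, en, isB]

lemma allShape (T : Multiset MayGen) (e : ℕ) (hT : ∀ g ∈ T, st g = 0 ∧ en g = e) :
    ∃ x y, T = Multiset.replicate x (a e) + Multiset.replicate y (h e 0) := by
  induction T using Multiset.induction with
  | empty => exact ⟨0, 0, rfl⟩
  | cons g T ih =>
    obtain ⟨x, y, rfl⟩ := ih (fun g hg => hT g (Multiset.mem_cons_of_mem hg))
    obtain ⟨h0, h1⟩ := hT g (Multiset.mem_cons_self _ _)
    rcases shape0 g e h0 h1 with rfl | rfl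
    · exact ⟨x + 1, y, by rw [Multiset.replicate_succ, Multiset.cons_add]⟩
    · exact ⟨x, y + 1, by rw [Multiset.replicate_succ, Multiset.add_cons]⟩

lemma all_of (T : Multiset MayGen) (P : MayGen → Prop) [DecidablePred P] (r : ℕ)
    (h1 : T.card = r) (h2 : T.countP P = r) : ∀ g ∈ T, P g :=
  Multiset.countP_eq_card.1 (h2.trans h1.symm)

lemma of_all (T : Multiset MayGen) (P : MayGen → Prop) [DecidablePred P]
    (h1 : ∀ g ∈ T, P g) : T.countP P = T.card := Multiset.countP_eq_card.2 h1

lemma none_of (T : Multiset MayGen) (P : MayGen → Prop) [DecidablePred P]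
    (h2 : T.countP P = 0) : ∀ g ∈ T, ¬ P g := Multiset.countP_eq_zero.1 h2

lemma isA_a (n : ℕ) : isA (a n) = true := rfl

lemma isA_h (i j : ℕ) : isA (h i j) = false := rfl

lemma isA_pos (g : MayGen) (hg : 0 < st g) : isA g = false := by
  cases g with
  | a n => simp [st] at hg
  | h i j => rfl
  | b i j => rfl

lemma cntA_a (x n : ℕ) : (Multiset.replicate x (a n)).countP (fun g => isA g) = x := by
  rw [of_all]
  · simp
  · intro g hg; rw [Multiset.eq_of_mem_replicate hg]; rfl

lemma cntA_h (x i j : ℕ) : (Multiset.replicate x (h i j)).countP (fun g => isA g) = 0 := by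
  rw [Multiset.countP_eq_zero]
  intro g hg; rw [Multiset.eq_of_mem_replicate hg]; simp [isA]

/-- The seven shapes with `m = l + 4`, `n = l + k + 6`. -/
def Seven (p l k : ℕ) (S : Multiset MayGen) : Prop :=
  S = Multiset.replicate (p - 3) (a (l + k + 6)) +
        {h 3 0, h 1 (l + 4), h (l + k + 4) 2, h (l + k + 6) 0} ∨
  S = Multiset.replicate (p - 3) (a (l + k + 6)) +
        {h 1 2, h (l + 5) 0, h (k + 2) (l + 4), h (l + k + 6) 0} ∨
  S = {a (l + 5)} + Multiset.replicate (p - 4) (a (l + k + 6)) +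
        {h 3 0, h (k + 2) (l + 4), h (l + k + 4) 2, h (l + k + 6) 0} ∨
  S = Multiset.replicate (p - 3) (a (l + k + 6)) +
        {h 3 0, h (l + 3) 2, h (k + 2) (l + 4), h (l + k + 6) 0} ∨
  S = Multiset.replicate (p - 3) (a (l + k + 6)) +
        {h 3 0, h (l + 5) 0, h (k + 2) (l + 4), h (l + k + 4) 2} ∨
  S = {a 3} + Multiset.replicate (p - 4) (a (l + k + 6)) +
        {h (l + 5) 0, h (k + 2) (l + 4), h (l + k + 4) 2, h (l + k + 6) 0} ∨
  S = Multiset.replicate (p - 3) (a (l + 4)) +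
        {h 3 0, h (l + 4) 0, h (l + 2) 2, h 1 (l + k + 6)}

set_option maxHeartbeats 400000 in
lemma case1 (p : ℕ) (hp : 5 ≤ p) (l k : ℕ) (S : Multiset MayGen)
    (hadm : Admissible S) (hfilt : S.card + S.countP (fun g => isB g) = p + 1)
    (hA : S.countP (fun g => isA g) = p - 3)
    (hc0 : S.countP (col 0) = p - 1) (hc1 : S.countP (col 1) = p - 1)
    (h2 : S.countP (col 2) = 0) (hm : S.countP (col (l + 4)) = 1)
    (hm1 : S.countP (col (l + 5)) = 0) (hn : S.countP (col (l + k + 6)) = 1) : False := by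
  obtain ⟨G, T, rfl, hG⟩ := pull' S _ (show 0 < S.countP (col (l + 4)) by omega)
  have hall2 := none_of _ _ h2
  have hall5 := none_of _ _ hm1
  have G2 := hall2 G (by simp)
  have G5 := hall5 G (by simp)
  have hGn : ¬ col (l + k + 6) G := by omega
  have hG0 : ¬ col 0 G := by omega
  have hG1 : ¬ col 1 G := by omega
  rw [Multiset.countP_cons, if_neg hGn, add_zero] at hn
  rw [Multiset.countP_cons, if_neg hG0, add_zero] at hc0
  rw [Multiset.countP_cons, if_neg hG1, add_zero] at hc1
  obtain ⟨H, U, rfl, hH⟩ := pull' T _ (show 0 < T.countP (col (l + k + 6)) by omega)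
  have H5 := hall5 H (by simp)
  have hH0 : ¬ col 0 H := by omega
  have hH1 : ¬ col 1 H := by omega
  rw [Multiset.countP_cons, if_neg hH0, add_zero] at hc0
  rw [Multiset.countP_cons, if_neg hH1, add_zero] at hc1
  have hle := Multiset.countP_le_card (col 0) U
  rw [Multiset.card_cons, Multiset.card_cons] at hfilt
  have hcard : U.card = p - 1 := by omega
  have u0 := all_of _ _ _ hcard hc0
  have u1 := all_of _ _ _ hcard hc1
  obtain ⟨x, y, rfl⟩ := allShape U 2 (fun g hg => by
    have := u0 g hg
    have := u1 g hg
    have := hall2 g (by simp [hg])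
    omega)
  have hy := hadm 2 0
  simp only [Multiset.count_cons, Multiset.count_add, Multiset.count_replicate, if_true] at hy
  have hnG : isA G = false := by
    exact isA_pos G (by omega)
  have hnH : isA H = false := by
    exact isA_pos H (by omega)
  simp only [Multiset.countP_cons, Multiset.countP_add, cntA_a, cntA_h, hnG, hnH] at hA
  simp at hA hcard
  omega

set_option maxHeartbeats 400000 in
lemma case2 (p : ℕ) (hp : 5 ≤ p) (l k : ℕ) (S : Multiset MayGen)
    (hadm : Admissible S) (hfilt : S.card + S.countP (fun g => isB g) = p + 1)
    (hA : S.countP (fun g => isA g) = p - 3)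
    (hc0 : S.countP (col 0) = p - 1) (hc1 : S.countP (col 1) = p - 1)
    (h2 : S.countP (col 2) = p) (h3 : S.countP (col 3) = p - 1)
    (hm' : S.countP (col (l + 3)) = p - 1)
    (hm : S.countP (col (l + 4)) = 0)
    (hn' : S.countP (col (l + k + 5)) = 0) (hn : S.countP (col (l + k + 6)) = 1)
    (hn1 : S.countP (col (l + k + 7)) = 0) : Seven p l k S := by
  obtain ⟨H, U, rfl, hH⟩ := pull' S _ (show 0 < S.countP (col (l + k + 6)) by omega)
  have hallm := none_of _ _ hm
  have hall5 := none_of _ _ hn'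
  have hall7 := none_of _ _ hn1
  have H5 := hall5 H (by simp)
  have H7 := hall7 H (by simp)
  have e0 : ¬ col 0 H := by omega
  have e1 : ¬ col 1 H := by omega
  have e2 : ¬ col 2 H := by omega
  have e3 : ¬ col 3 H := by omega
  have e4 : ¬ col (l + 3) H := by omega
  rw [Multiset.countP_cons, if_neg e0, add_zero] at hc0
  rw [Multiset.countP_cons, if_neg e1, add_zero] at hc1
  rw [Multiset.countP_cons, if_neg e2, add_zero] at h2
  rw [Multiset.countP_cons, if_neg e3, add_zero] at h3
  rw [Multiset.countP_cons, if_neg e4, add_zero] at hm'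
  have hle := Multiset.countP_le_card (col 2) U
  rw [Multiset.card_cons] at hfilt
  have hcard : U.card = p := by omega
  have hnoB := none_of _ _ (show Multiset.countP (fun g => (isB g : Prop)) (H ::ₘ U) = 0 by omega)
  have u2 := all_of _ _ _ hcard h2
  have hHs : H = h 1 (l + k + 6) := shapePos H (hnoB H (by simp)) _ _ (by omega)
    (by omega) (by omega)
  subst hHs
  -- the element starting at 2
  obtain ⟨C, T, rfl, hC⟩ := pull U (col 0) (by omega)
  rw [Multiset.countP_cons, if_neg hC, add_zero] at hc0
  rw [Multiset.card_cons] at hcard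
  have hcT : T.card = p - 1 := by omega
  have t0 := all_of _ _ _ hcT hc0
  have t1 : T.countP (col 1) = T.card := of_all _ _ (fun g hg => by
    have := t0 g hg
    have := u2 g (by simp [hg])
    omega)
  have hC1 : ¬ col 1 C := by
    intro hh
    rw [Multiset.countP_cons, if_pos hh] at hc1; omega
  have hC2 := u2 C (by simp)
  have hCm := hallm C (by simp)
  have hCs : st C = 2 := by omega
  have hCB := hnoB C (by simp)
  by_cases hC3 : col 3 C
  · -- the short one lies in `T`
    rw [Multiset.countP_cons, if_pos hC3] at h3
    obtain ⟨B, R, rfl, hB⟩ := pull T (col 3) (by omega)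
    have B2 := u2 B (by simp)
    have B0 := t0 B (by simp)
    have hB' : ¬ col (l + 3) B := by omega
    have hBe : en B = 3 := by omega
    have hBs : st B = 0 := by omega
    simp only [Multiset.countP_cons, if_neg hB', add_zero] at hm'
    rw [Multiset.card_cons] at hcT
    have hcR : R.card = p - 2 := by omega
    have hR := Multiset.countP_le_card (col (l + 3)) R
    have hCm' : col (l + 3) C := by
      by_contra hh
      rw [if_neg hh] at hm'; omega
    rw [if_pos hCm'] at hm'
    have r3 := all_of _ _ _ hcR (show R.countP (col (l + 3)) = p - 2 by omega)
    have hCs : C = h (l + 2) 2 := shapePos C hCB _ _ (by omega) hCs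
      (by omega)
    subst hCs
    obtain ⟨x, y, rfl⟩ := allShape R (l + 4) (fun g hg => by
      have := r3 g hg
      have := t0 g (by simp [hg])
      have := hallm g (by simp [hg])
      omega)
    have hy := hadm (l + 4) 0
    simp only [Multiset.count_cons, Multiset.count_add, Multiset.count_replicate, if_true] at hy
    rcases shape0 B 3 hBs hBe with rfl | rfl
    · simp only [Multiset.countP_cons, Multiset.countP_add, cntA_a, cntA_h, isA_a, isA_h] at hA
      simp at hA hcR
      omega
    · simp only [Multiset.countP_cons, Multiset.countP_add, cntA_a, cntA_h, isA_a, isA_h] at hA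
      simp at hA hcR
      obtain rfl : y = 1 := by omega
      obtain rfl : x = p - 3 := by omega
      unfold Seven
      iterate 6 right
      simp only [Multiset.insert_eq_cons, ← Multiset.singleton_add, Multiset.replicate_one]
      abel
  · rw [Multiset.countP_cons, if_neg hC3] at h3
    have hCm' : ¬ col (l + 3) C := by omega
    rw [Multiset.countP_cons, if_neg hCm'] at hm'
    have r3 := all_of _ _ _ hcT hm'
    obtain ⟨x, y, rfl⟩ := allShape T (l + 4) (fun g hg => by
      have := r3 g hg
      have := t0 g (by simp [hg])
      have := hallm g (by simp [hg])
      omega)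
    have hy := hadm (l + 4) 0
    simp only [Multiset.count_cons, Multiset.count_add, Multiset.count_replicate, if_true] at hy
    have hnC : isA C = false := by
      exact isA_pos C (by omega)
    simp only [Multiset.countP_cons, Multiset.countP_add, cntA_a, cntA_h, hnC, isA_a, isA_h] at hA
    simp at hA hcT
    omega

set_option maxHeartbeats 1000000 in
lemma case3 (p : ℕ) (hp : 5 ≤ p) (l k : ℕ) (S : Multiset MayGen)
    (hadm : Admissible S) (hfilt : S.card + S.countP (fun g => isB g) = p + 1)
    (hA : S.countP (fun g => isA g) = p - 3)
    (hc0 : S.countP (col 0) = p - 1) (hc1 : S.countP (col 1) = p - 1)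
    (h2 : S.countP (col 2) = p) (h3 : S.countP (col 3) = p - 1)
    (hm' : S.countP (col (l + 3)) = p - 1)
    (hm : S.countP (col (l + 4)) = p)
    (hm1 : S.countP (col (l + 5)) = p - 1)
    (hn' : S.countP (col (l + k + 5)) = p - 1) (hn : S.countP (col (l + k + 6)) = 0) :
    Seven p l k S := by
  have hle := Multiset.countP_le_card (col 2) S
  have hcard : S.card = p + 1 := by
    by_contra hne
    have hcp : S.card = p := by omega
    have x2 := all_of _ _ _ hcp h2
    have x4 := all_of _ _ _ hcp hm
    have : S.countP (col 3) = S.card := of_all _ _ (fun g hg => by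
      have := x2 g hg
      have := x4 g hg
      omega)
    omega
  have hnoB := none_of _ _ (show Multiset.countP (fun g => (isB g : Prop)) S = 0 by omega)
  have hallN := none_of _ _ hn
  obtain ⟨A, S1, rfl, hA2⟩ := pull S (col 2) (by omega)
  rw [Multiset.card_cons] at hcard
  have hc1' : S1.card = p := by omega
  rw [Multiset.countP_cons, if_neg hA2, add_zero] at h2
  have s2 := all_of _ _ _ hc1' h2
  have hAm : col (l + 4) A := by
    by_contra hh
    rw [Multiset.countP_cons, if_neg hh, add_zero] at hm
    have x4 := all_of _ _ _ hc1' hm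
    have : S1.countP (col 3) = S1.card := of_all _ _ (fun g hg => by
      have := x4 g hg
      have := s2 g hg
      omega)
    rw [Multiset.countP_cons] at h3; omega
  rw [Multiset.countP_cons, if_pos hAm] at hm
  obtain ⟨B, T, rfl, hBm⟩ := pull S1 (col (l + 4)) (by omega)
  rw [Multiset.card_cons] at hc1'
  have hcT : T.card = p - 1 := by omega
  rw [Multiset.countP_cons, if_neg hBm] at hm
  have t4 := all_of _ _ _ hcT (show T.countP (col (l + 4)) = p - 1 by omega)
  have t2 : ∀ g ∈ T, col 2 g := fun g hg => s2 g (by simp [hg])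
  have x3 : T.countP (col 3) = T.card := of_all _ _ (fun g hg => by
      have := t4 g hg
      have := t2 g hg
      omega)
  have x3' : T.countP (col (l + 3)) = T.card := of_all _ _ (fun g hg => by
      have := t4 g hg
      have := t2 g hg
      omega)
  have hA3' : ¬ col (l + 3) A := by
    intro hh
    rw [Multiset.countP_cons, if_pos hh, Multiset.countP_cons] at hm'; omega
  have hB3 : ¬ col 3 B := by
    intro hh
    rw [Multiset.countP_cons, Multiset.countP_cons, if_pos hh] at h3; omega
  have hB2 := s2 B (by simp)
  have hAst : st A = l + 4 := by omega
  have hBen : en B = 3 := by omega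
  have hAB := hnoB A (by simp)
  have hBB := hnoB B (by simp)
  have hAN := hallN A (by simp)
  have tN : ∀ g ∈ T, ¬ col (l + k + 6) g := fun g hg => hallN g (by simp [hg])
  have tB : ∀ g ∈ T, ¬ isB g := fun g hg => hnoB g (by simp [hg])
  clear hallN hnoB s2 x3 x3' hm h3 hm' hfilt h2
  have a0 : ¬ col 0 A := by omega
  have a1 : ¬ col 1 A := by omega
  rw [Multiset.countP_cons, if_neg a0, add_zero] at hc0
  rw [Multiset.countP_cons, if_neg a1, add_zero] at hc1
  have b5 : ¬ col (l + 5) B := by omega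
  have b5' : ¬ col (l + k + 5) B := by omega
  rw [Multiset.countP_cons, Multiset.countP_cons, if_neg b5, add_zero] at hm1
  rw [Multiset.countP_cons, Multiset.countP_cons, if_neg b5', add_zero] at hn'
  have hadmn := hadm (l + k + 6) 0
  have hadm3 := hadm 3 0
  have hadm5 := hadm (l + 5) 0
  clear hadm
  -- ends of A
  have endA : (en A = l + 5 ∧ T.countP (col (l + k + 5)) = p - 1) ∨
      (col (l + 5) A ∧ T.countP (col (l + 5)) = p - 2) := by
    by_cases hh : col (l + 5) A
    · right
      rw [if_pos hh] at hm1
      exact ⟨hh, by omega⟩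
    · left
      have : ¬ col (l + k + 5) A := by omega
      rw [if_neg this] at hn'
      exact ⟨by omega, hn'⟩
  by_cases hB0 : col 0 B
  · -- B starts at 0
    have hBst : st B = 0 := by omega
    have hB1 : col 1 B := by omega
    rw [Multiset.countP_cons, if_pos hB0] at hc0
    rw [Multiset.countP_cons, if_pos hB1] at hc1
    obtain ⟨C, R, rfl, hC0⟩ := pull T (col 0) (by omega)
    rw [Multiset.card_cons] at hcT
    have hcR : R.card = p - 2 := by omega
    rw [Multiset.countP_cons, if_neg hC0] at hc0
    have r0 := all_of _ _ _ hcR (show R.countP (col 0) = p - 2 by omega)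
    have r1 : R.countP (col 1) = R.card := of_all _ _ (fun g hg => by
      have := r0 g hg
      have := t2 g (by simp [hg])
      omega)
    have hC1 : ¬ col 1 C := by
      intro hh
      rw [Multiset.countP_cons, if_pos hh] at hc1; omega
    have hC2 := t2 C (by simp)
    have hC4 := t4 C (by simp)
    have hCN := tN C (by simp)
    have hCB := tB C (by simp)
    have hCst : st C = 2 := by omega
    rcases endA with ⟨hAen, hT⟩ | ⟨hA5, hT⟩
    · -- shape 1
      have tt := all_of _ _ (p - 1) (by rw [Multiset.card_cons]; omega) hT
      have hC5 := tt C (by simp)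
      obtain ⟨x, y, rfl⟩ := allShape R (l + k + 6) (fun g hg => by
        have := tt g (by simp [hg])
        have := r0 g hg
        have := tN g (by simp [hg])
        omega)
      have hAs : A = h 1 (l + 4) := shapePos A hAB _ _ (by omega) hAst (by omega)
      have hCs : C = h (l + k + 4) 2 := shapePos C hCB _ _ (by omega) hCst
        (by omega)
      subst hAs hCs
      rcases shape0 B 3 hBst hBen with rfl | rfl
      all_goals
        simp [Multiset.count_cons, Multiset.count_add, Multiset.count_replicate] at hadmn
        simp only [Multiset.countP_cons, Multiset.countP_add, cntA_a, cntA_h, isA_a, isA_h] at hA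
        simp at hA hcR
      · omega
      · obtain rfl : y = 1 := by omega
        obtain rfl : x = p - 3 := by omega
        unfold Seven
        left
        simp only [Multiset.insert_eq_cons, ← Multiset.singleton_add, Multiset.replicate_one]
        abel
    · by_cases hC5 : col (l + 5) C
      · rw [Multiset.countP_cons, if_pos hC5] at hT
        obtain ⟨D, Q, rfl, hD5⟩ := pull R (col (l + 5)) (by omega)
        have hD0 := r0 D (by simp)
        have hD4 := t4 D (by simp)
        have hD5' : ¬ col (l + k + 5) D := by omega
        have hDen : en D = l + 5 := by omega
        have hDst : st D = 0 := by omega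
        rw [Multiset.card_cons] at hcR
        have hcQ : Q.card = p - 3 := by omega
        rw [Multiset.countP_cons, Multiset.countP_cons, if_neg hD5'] at hn'
        have hQ := Multiset.countP_le_card (col (l + k + 5)) Q
        have hA5' : col (l + k + 5) A := by
          by_contra hh
          rw [if_neg hh] at hn'
          split_ifs at hn' <;> omega
        have hC5' : col (l + k + 5) C := by
          by_contra hh
          rw [if_neg hh] at hn'
          split_ifs at hn' <;> omega
        rw [if_pos hA5', if_pos hC5'] at hn'
        have qq := all_of _ _ _ hcQ (show Q.countP (col (l + k + 5)) = p - 3 by omega)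
        obtain ⟨x, y, rfl⟩ := allShape Q (l + k + 6) (fun g hg => by
          have := qq g hg
          have := r0 g (by simp [hg])
          have := tN g (by simp [hg])
          omega)
        have hAs : A = h (k + 2) (l + 4) := shapePos A hAB _ _ (by omega) hAst
          (by omega)
        have hCs : C = h (l + k + 4) 2 := shapePos C hCB _ _ (by omega) hCst
          (by omega)
        subst hAs hCs
        rcases shape0 B 3 hBst hBen with rfl | rfl <;>
        rcases shape0 D (l + 5) hDst hDen with rfl | rfl
        all_goals
          simp [Multiset.count_cons, Multiset.count_add, Multiset.count_replicate] at hadmn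
          simp only [Multiset.countP_cons, Multiset.countP_add, cntA_a, cntA_h, isA_a, isA_h] at hA
          simp at hA hcQ
        · omega
        · obtain rfl : y = 1 := by omega
          obtain rfl : x = p - 4 := by omega
          unfold Seven
          iterate 5 right
          left
          simp only [Multiset.insert_eq_cons, ← Multiset.singleton_add, Multiset.replicate_one]
          abel
        · obtain rfl : y = 1 := by omega
          obtain rfl : x = p - 4 := by omega
          unfold Seven
          iterate 2 right
          left
          simp only [Multiset.insert_eq_cons, ← Multiset.singleton_add, Multiset.replicate_one]
          abel
        · obtain rfl : y = 0 := by omega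
          obtain rfl : x = p - 3 := by omega
          unfold Seven
          iterate 4 right
          left
          simp only [Multiset.insert_eq_cons, ← Multiset.singleton_add, Multiset.replicate_zero]
          abel
      · -- shape 4
        have hCen : en C = l + 5 := by omega
        have hC5' : ¬ col (l + k + 5) C := by omega
        rw [Multiset.countP_cons, if_neg hC5'] at hn'
        have hR := Multiset.countP_le_card (col (l + k + 5)) R
        have hA5' : col (l + k + 5) A := by
          by_contra hh
          rw [if_neg hh] at hn'
          omega
        rw [if_pos hA5'] at hn'
        have qq := all_of _ _ _ hcR (show R.countP (col (l + k + 5)) = p - 2 by omega)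
        obtain ⟨x, y, rfl⟩ := allShape R (l + k + 6) (fun g hg => by
          have := qq g hg
          have := r0 g hg
          have := tN g (by simp [hg])
          omega)
        have hAs : A = h (k + 2) (l + 4) := shapePos A hAB _ _ (by omega) hAst
          (by omega)
        have hCs : C = h (l + 3) 2 := shapePos C hCB _ _ (by omega) hCst (by omega)
        subst hAs hCs
        rcases shape0 B 3 hBst hBen with rfl | rfl
        all_goals
          simp [Multiset.count_cons, Multiset.count_add, Multiset.count_replicate] at hadmn
          simp only [Multiset.countP_cons, Multiset.countP_add, cntA_a, cntA_h, isA_a, isA_h] at hA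
          simp at hA hcR
        · omega
        · obtain rfl : y = 1 := by omega
          obtain rfl : x = p - 3 := by omega
          unfold Seven
          iterate 3 right
          left
          simp only [Multiset.insert_eq_cons, ← Multiset.singleton_add, Multiset.replicate_one]
          abel
  · -- B starts at 2
    rw [Multiset.countP_cons, if_neg hB0, add_zero] at hc0
    have t0 := all_of _ _ _ hcT hc0
    have t1 : T.countP (col 1) = T.card := of_all _ _ (fun g hg => by
      have := t0 g hg
      have := t2 g hg
      omega)
    have hB1 : ¬ col 1 B := by
      intro hh
      rw [Multiset.countP_cons, if_pos hh] at hc1; omega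
    have hBs : B = h 1 2 := shapePos B hBB _ _ (by omega) (by omega)
      (by omega)
    subst hBs
    rcases endA with ⟨hAen, hT⟩ | ⟨hA5, hT⟩
    · have tt := all_of _ _ _ hcT hT
      obtain ⟨x, y, rfl⟩ := allShape T (l + k + 6) (fun g hg => by
        have := tt g hg
        have := t0 g hg
        have := tN g hg
        omega)
      have hAs : A = h 1 (l + 4) := shapePos A hAB _ _ (by omega) hAst (by omega)
      subst hAs
      simp [Multiset.count_cons, Multiset.count_add, Multiset.count_replicate] at hadmn
      simp only [Multiset.countP_cons, Multiset.countP_add, cntA_a, cntA_h, isA_a, isA_h] at hA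
      simp at hA hcT
      omega
    · obtain ⟨D, Q, rfl, hD5⟩ := pull T (col (l + 5)) (by omega)
      have hD0 := t0 D (by simp)
      have hD4 := t4 D (by simp)
      have hD5' : ¬ col (l + k + 5) D := by omega
      have hDen : en D = l + 5 := by omega
      have hDst : st D = 0 := by omega
      rw [Multiset.card_cons] at hcT
      have hcQ : Q.card = p - 2 := by omega
      rw [Multiset.countP_cons, if_neg hD5'] at hn'
      have hQ := Multiset.countP_le_card (col (l + k + 5)) Q
      have hA5' : col (l + k + 5) A := by
        by_contra hh
        rw [if_neg hh] at hn'
        omega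
      rw [if_pos hA5'] at hn'
      have qq := all_of _ _ _ hcQ (show Q.countP (col (l + k + 5)) = p - 2 by omega)
      obtain ⟨x, y, rfl⟩ := allShape Q (l + k + 6) (fun g hg => by
        have := qq g hg
        have := t0 g (by simp [hg])
        have := tN g (by simp [hg])
        omega)
      have hAs : A = h (k + 2) (l + 4) := shapePos A hAB _ _ (by omega) hAst
        (by omega)
      subst hAs
      rcases shape0 D (l + 5) hDst hDen with rfl | rfl
      all_goals
        simp [Multiset.count_cons, Multiset.count_add, Multiset.count_replicate] at hadmn
        simp only [Multiset.countP_cons, Multiset.countP_add, cntA_a, cntA_h, isA_a, isA_h] at hA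
        simp at hA hcQ
      · omega
      · obtain rfl : y = 1 := by omega
        obtain rfl : x = p - 3 := by omega
        unfold Seven
        iterate 1 right
        left
        simp only [Multiset.insert_eq_cons, ← Multiset.singleton_add, Multiset.replicate_one]
        abel

lemma forward (p : ℕ) (hp : 5 ≤ p) (l k : ℕ) (S : Multiset MayGen)
    (hadm : Admissible S) (hf : totalFilt S = p + 1)
    (hd : totalDeg p S =
      2 * (p - 1) * (p ^ (l + k + 6) + p ^ (l + 4) + p ^ 2 - 1) + (p - 3)) :
    Seven p l k S := by
  rw [totalFilt_eq] at hf
  rw [totalDeg_eq p (by omega)] at hd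
  have hle := Multiset.countP_le_card (fun g => (isA g : Prop)) S
  have hpos : 1 ≤ p ^ 2 := Nat.one_le_pow _ _ (by omega)
  obtain ⟨X, hX⟩ : ∃ X, p ^ (l + k + 6) + p ^ (l + 4) + p ^ 2 - 1 = X := ⟨_, rfl⟩
  rw [hX] at hd
  have hWX : (S.map (V p 0)).sum = X := by
    obtain ⟨r, rfl⟩ : ∃ r, p = r + 5 := ⟨p - 5, by omega⟩
    rw [show r + 5 - 1 = r + 4 by omega, show r + 5 - 3 = r + 2 by omega] at hd
    rcases lt_trichotomy (S.map (V (r + 5) 0)).sum X with hlt | heq | hgt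
    · exfalso; nlinarith
    · exact heq
    · exfalso; nlinarith
  have hA : S.countP (fun g => isA g) = p - 3 := by rw [hWX] at hd; omega
  have hdg := digits p hp (fun j => S.countP (col j)) (fun j => (S.map (V p j)).sum)
    (fun j => W_rec p j S)
    (fun j => (Multiset.countP_le_card _ S).trans (by omega)) l k
    (fun i hi j hij => by
      have := none_of _ _ hi
      have h1 := disj_count S (col j) (fun g => isA g) (fun g hg hc ha => by
        have h2 := this g hg
        cases g with
        | a t => exact h2 ⟨by simp [st], lt_of_le_of_lt hij hc.2⟩
        | h _ _ => simp [isA] at ha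
        | b _ _ => simp [isA] at ha)
      show S.countP (col j) ≤ 4
      omega)
    (by show (S.map (V p 0)).sum + 1 = _; omega)
  obtain ⟨hc0, hc1, ⟨h2, hm, hm1, hn⟩ | ⟨h2, h3, ⟨hm, hn', hn, hn1⟩ | ⟨hm, h5, hn⟩⟩⟩ := hdg
  · exact (case1 p hp l k S hadm hf hA hc0 hc1 h2 hm hm1 hn).elim
  · exact case2 p hp l k S hadm hf hA hc0 hc1 h2 (h3 3 (by omega) (by omega))
      (h3 (l + 3) (by omega) (by omega)) hm hn' hn hn1
  · exact case3 p hp l k S hadm hf hA hc0 hc1 h2 (h3 3 (by omega) (by omega))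
      (h3 (l + 3) (by omega) (by omega)) hm (h5 (l + 5) (by omega) (by omega))
      (h5 (l + k + 5) (by omega) (by omega)) hn

lemma valid_check (r1 r2 r3 r4 : MayGen) (U : Multiset MayGen)
    (hU : ∀ g ∈ U, ∃ t, g = a t)
    (hd : [r1, r2, r3, r4].Nodup)
    (hv : r1.IsValid ∧ r2.IsValid ∧ r3.IsValid ∧ r4.IsValid) :
    (∀ g ∈ U + {r1, r2, r3, r4}, g.IsValid) ∧ Admissible (U + {r1, r2, r3, r4}) := by
  constructor
  · intro g hg
    simp only [Multiset.mem_add, Multiset.insert_eq_cons, Multiset.mem_cons,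
      Multiset.mem_singleton] at hg
    rcases hg with hg | rfl | rfl | rfl | rfl
    · obtain ⟨t, rfl⟩ := hU g hg; trivial
    · exact hv.1
    · exact hv.2.1
    · exact hv.2.2.1
    · exact hv.2.2.2
  · intro i j
    have h0 : U.count (h i j) = 0 := Multiset.count_eq_zero.2 (fun hm => by
      obtain ⟨t, ht⟩ := hU _ hm; cases ht)
    rw [Multiset.count_add, h0, zero_add]
    have : Multiset.Nodup ({r1, r2, r3, r4} : Multiset MayGen) := by
      have : ({r1, r2, r3, r4} : Multiset MayGen) = (([r1, r2, r3, r4] : List MayGen) : Multiset MayGen) := rfl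
      rw [this]; exact hd
    exact Multiset.nodup_iff_count_le_one.1 this _

lemma degZ_a (p k : ℕ) (hp : 1 ≤ p) : ((deg p (a k) : ℕ) : ℤ) = 2 * (p : ℤ) ^ k - 1 := by
  have : 1 ≤ p ^ k := Nat.one_le_pow _ _ hp
  unfold deg
  rw [Nat.cast_sub (by omega)]
  push_cast; ring

lemma degZ_h (p i j : ℕ) (hp : 1 ≤ p) :
    ((deg p (h i j) : ℕ) : ℤ) = 2 * ((p : ℤ) ^ i - 1) * (p : ℤ) ^ j := by
  have : 1 ≤ p ^ i := Nat.one_le_pow _ _ hp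
  unfold deg
  rw [Nat.cast_mul, Nat.cast_mul, Nat.cast_sub this]
  push_cast; ring

lemma mem_rep (x n : ℕ) : ∀ g ∈ Multiset.replicate x (a n), ∃ t, g = a t :=
  fun _ hg => ⟨n, Multiset.eq_of_mem_replicate hg⟩

lemma mem_rep' (x n n' : ℕ) :
    ∀ g ∈ ({a n'} + Multiset.replicate x (a n) : Multiset MayGen), ∃ t, g = a t := by
  intro g hg
  rcases Multiset.mem_add.1 hg with hg | hg
  · exact ⟨n', Multiset.mem_singleton.1 hg⟩
  · exact ⟨n, Multiset.eq_of_mem_replicate hg⟩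

lemma backward (p : ℕ) (hp : 5 ≤ p) (l k : ℕ) (S : Multiset MayGen) (hS : Seven p l k S) :
    ((∀ x ∈ S, x.IsValid) ∧ Admissible S) ∧ totalFilt S = p + 1 ∧
      totalDeg p S =
        2 * (p - 1) * (p ^ (l + k + 6) + p ^ (l + 4) + p ^ 2 - 1) + (p - 3) := by
  have hp1 : 1 ≤ p := by omega
  have hpos : 1 ≤ p ^ (l + k + 6) + p ^ (l + 4) + p ^ 2 :=
    le_add_left (Nat.one_le_pow _ _ hp1)
  rcases hS with rfl | rfl | rfl | rfl | rfl | rfl | rfl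
  all_goals
    refine ⟨valid_check _ _ _ _ _ (by first | exact mem_rep _ _ | exact mem_rep' _ _ _)
      (by simp; try omega) (by simp [IsValid]), ?_, ?_⟩
    · simp only [totalFilt, Multiset.insert_eq_cons, Multiset.map_add, Multiset.map_replicate,
        Multiset.map_cons, Multiset.map_singleton, Multiset.sum_add, Multiset.sum_replicate,
        Multiset.sum_cons, Multiset.sum_singleton, filt, smul_eq_mul]
      omega
    · simp only [totalDeg, Multiset.insert_eq_cons, Multiset.map_add, Multiset.map_replicate,
        Multiset.map_cons, Multiset.map_singleton, Multiset.sum_add, Multiset.sum_replicate,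
        Multiset.sum_cons, Multiset.sum_singleton, smul_eq_mul]
      zify [hpos, hp1, (show 3 ≤ p by omega), (show 4 ≤ p by omega)]
      simp only [degZ_a p _ hp1, degZ_h p _ _ hp1]
      ring

end MayAux

/-- for `n ≥ m+2 > 5`, the admissible monomials of total filtration `p+1`
and total degree `q(pⁿ + pᵐ + p² - 1) + p - 3` are exactly the seven multisets
`g₁, …, g₇` of Lemma 3.1. -/
theorem stmt8 (p : ℕ) (hp : p.Prime) (hp5 : 5 ≤ p) (m n : ℕ)
    (hmn : m + 2 ≤ n) (hm : 5 < m + 2) (S : Multiset MayGen) :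
    ((∀ x ∈ S, x.IsValid) ∧ Admissible S ∧ totalFilt S = p + 1 ∧
        totalDeg p S = 2 * (p - 1) * (p ^ n + p ^ m + p ^ 2 - 1) + (p - 3)) ↔
      (S = Multiset.replicate (p - 3) (MayGen.a n) +
            {MayGen.h 3 0, MayGen.h 1 m, MayGen.h (n - 2) 2, MayGen.h n 0} ∨
       S = Multiset.replicate (p - 3) (MayGen.a n) +
            {MayGen.h 1 2, MayGen.h (m + 1) 0, MayGen.h (n - m) m, MayGen.h n 0} ∨
       S = {MayGen.a (m + 1)} + Multiset.replicate (p - 4) (MayGen.a n) +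
            {MayGen.h 3 0, MayGen.h (n - m) m, MayGen.h (n - 2) 2, MayGen.h n 0} ∨
       S = Multiset.replicate (p - 3) (MayGen.a n) +
            {MayGen.h 3 0, MayGen.h (m - 1) 2, MayGen.h (n - m) m, MayGen.h n 0} ∨
       S = Multiset.replicate (p - 3) (MayGen.a n) +
            {MayGen.h 3 0, MayGen.h (m + 1) 0, MayGen.h (n - m) m, MayGen.h (n - 2) 2} ∨
       S = {MayGen.a 3} + Multiset.replicate (p - 4) (MayGen.a n) +
            {MayGen.h (m + 1) 0, MayGen.h (n - m) m, MayGen.h (n - 2) 2, MayGen.h n 0} ∨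
       S = Multiset.replicate (p - 3) (MayGen.a m) +
            {MayGen.h 3 0, MayGen.h m 0, MayGen.h (m - 2) 2, MayGen.h 1 n}) := by
  obtain ⟨l, rfl⟩ : ∃ l, m = l + 4 := ⟨m - 4, by omega⟩
  obtain ⟨k, rfl⟩ : ∃ k, n = l + k + 6 := ⟨n - l - 6, by omega⟩
  rw [show l + k + 6 - 2 = l + k + 4 by omega, show l + k + 6 - (l + 4) = k + 2 by omega,
    show l + 4 - 1 = l + 3 by omega, show l + 4 - 2 = l + 2 by omega,
    show l + 4 + 1 = l + 5 by omega]
  constructor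
  · rintro ⟨_, hadm, hf, hd⟩
    exact MayAux.forward p hp5 l k S hadm hf hd
  · intro hS
    obtain ⟨⟨hv, hadm⟩, hf, hd⟩ := MayAux.backward p hp5 l k S hS
    exact ⟨hv, hadm, hf, hd⟩
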